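/- arXiv:1707.06417 — 3 statements merged into one kernel-verified Lean document; each statement's English description precedes it below -/
import Mathlib

section
/- Let p be a prime and Γ a finite abelian group, endowed with the discrete topology, whose order is not divisible by p. Then the map sending a continuous group homomorphism f : ℚ_pˣ → Γ to the pair (f(p), f restricted to the torsion subgroup of ℤ_pˣ) is a bijection from the set of continuous group homomorphisms ℚ_pˣ → Γ onto the product of Γ with the set of group homomorphisms from the torsion subgroup of ℤ_pˣ to Γ. -/
/-!
Let `K` be a local field with ring of integers `R`, uniformizer `ϖ` and residue field `k` of
characteristic `p`. Since `Kˣ = ϖ ^ ℤ × Rˣ`, a homomorphism `Kˣ → Γ` is determined by its value at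
`ϖ`, which is arbitrary, and its restriction to `Rˣ`. Every `w` in `1 + 𝔪` satisfies
`w ^ p ^ n → 1`, so it is killed by the continuous characters of `Rˣ`, which are thus the characters
of `kˣ`. By Hensel's lemma the torsion subgroup of `Rˣ` surjects onto `kˣ`. The kernel of this
surjection is `p`-primary, so the characters of the torsion subgroup are those of `kˣ` as well.
-/

open IsLocalRing Filter Topology

/-- The reduction map `Rˣ → kˣ` on units, where `k` is the residue field of the local ring `R`. Its
kernel is the group `1 + 𝔪` of principal units. -/
noncomputable def residueUnits (R : Type*) [CommRing R] [IsLocalRing R] :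
    Rˣ →* (ResidueField R)ˣ :=
  Units.map (residue R : R →* ResidueField R)

section LocalRing

variable {R : Type*} [CommRing R]

section

variable [IsLocalRing R]

lemma residue_eq_residue_iff_sub_mem {x y : R} :
    residue R x = residue R y ↔ x - y ∈ maximalIdeal R :=
  Ideal.Quotient.eq

lemma residueUnits_eq_one_iff {u : Rˣ} :
    residueUnits R u = 1 ↔ (u : R) - 1 ∈ maximalIdeal R := by
  rw [← residue_eq_residue_iff_sub_mem, map_one, Units.ext_iff]
  rfl

theorem eq_one_of_pow_eq_one_of_residueUnits_eq_one {u : Rˣ} {m : ℕ}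
    (hm : (m : ResidueField R) ≠ 0) (hu : residueUnits R u = 1) (hum : u ^ m = 1) : u = 1 := by
  have hres : residue R u = 1 := congrArg Units.val hu
  have hunit : IsUnit (∑ i ∈ Finset.range m, (u : R) ^ i) := by
    rw [← residue_ne_zero_iff_isUnit]
    simpa [hres] using hm
  have hgeom : (∑ i ∈ Finset.range m, (u : R) ^ i) * (u - 1) = 0 := by
    rw [geom_sum_mul, ← Units.val_pow_eq_pow_val, hum, Units.val_one, sub_self]
  exact Units.ext (sub_eq_zero.mp (hunit.mul_right_eq_zero.mp hgeom))

theorem exists_pow_char_pow_eq_one_of_residueUnits_eq_one (p : ℕ) [CharP (ResidueField R) p]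
    {u : Rˣ} (hu : residueUnits R u = 1) (hfin : IsOfFinOrder u) : ∃ n : ℕ, u ^ p ^ n = 1 := by
  obtain ⟨m, hm, hum⟩ := isOfFinOrder_iff_pow_eq_one.mp hfin
  obtain ⟨n, m', hm', rfl⟩ := Nat.exists_eq_pow_mul_and_not_dvd hm.ne' p
    (CharP.char_ne_one (ResidueField R) p)
  refine ⟨n, eq_one_of_pow_eq_one_of_residueUnits_eq_one (m := m') ?_ ?_ ?_⟩
  · rwa [Ne, CharP.cast_eq_zero_iff (ResidueField R) p]
  · rw [map_pow, hu, one_pow]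
  · rw [← pow_mul, hum]

end

theorem henselianLocalRing_of_isAdicComplete [IsLocalRing R] [IsAdicComplete (maximalIdeal R) R] :
    HenselianLocalRing R where
  is_henselian f hf a₀ h₁ h₂ := HenselianRing.is_henselian f hf a₀ h₁ (h₂.map _)

theorem exists_pow_eq_one_and_residueUnits_eq [HenselianLocalRing R] {m : ℕ}
    (hm : (m : ResidueField R) ≠ 0) {a : (ResidueField R)ˣ} (ha : a ^ m = 1) :
    ∃ z : Rˣ, z ^ m = 1 ∧ residueUnits R z = a := by
  have hm0 : m ≠ 0 := by
    rintro rfl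
    exact hm Nat.cast_zero
  obtain ⟨u, hu⟩ := residue_surjective (R := R) (a : ResidueField R)
  have hroot : (Polynomial.X ^ m - 1 : Polynomial R).eval u ∈ maximalIdeal R := by
    have ham : (a : ResidueField R) ^ m = 1 := congrArg Units.val ha
    rw [← residue_eq_zero_iff]
    simp [hu, ham]
  have hsimple : IsUnit ((Polynomial.X ^ m - 1 : Polynomial R).derivative.eval u) := by
    rw [← residue_ne_zero_iff_isUnit]
    simp [Polynomial.derivative_X_pow, hu, hm]
  obtain ⟨z, hz, hzu⟩ := HenselianLocalRing.is_henselian _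
    (Polynomial.monic_X_pow_sub_C (1 : R) hm0) u hroot hsimple
  have hzm : z ^ m = 1 := by simpa [sub_eq_zero] using hz
  refine ⟨Units.ofPowEqOne z m hzm hm0, Units.pow_ofPowEqOne hzm hm0, Units.ext ?_⟩
  exact (residue_eq_residue_iff_sub_mem.mpr hzu).trans hu

theorem exists_mem_torsion_residueUnits_eq [HenselianLocalRing R] [Finite (ResidueField R)]
    (a : (ResidueField R)ˣ) : ∃ z ∈ CommGroup.torsion Rˣ, residueUnits R z = a := by
  have := Fintype.ofFinite (ResidueField R)
  have hcard : ((Fintype.card (ResidueField R) - 1 : ℕ) : ResidueField R) ≠ 0 := by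
    simp [Nat.cast_pred Fintype.card_pos]
  obtain ⟨z, hz, hza⟩ := exists_pow_eq_one_and_residueUnits_eq hcard
    (Units.ext (FiniteField.pow_card_sub_one_eq_one _ a.ne_zero) : a ^ _ = 1)
  have hpos : 0 < Fintype.card (ResidueField R) - 1 := Nat.sub_pos_of_lt Fintype.one_lt_card
  exact ⟨z, isOfFinOrder_iff_pow_eq_one.mpr ⟨_, hpos, hz⟩, hza⟩

theorem exists_hom_comp_residueUnits_torsion_eq [HenselianLocalRing R] [Finite (ResidueField R)]
    {p : ℕ} [CharP (ResidueField R) p] {Γ : Type*} [Group Γ]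
    (hΓ : ∀ (g : Γ) (n : ℕ), g ^ p ^ n = 1 → g = 1) (φ : CommGroup.torsion Rˣ →* Γ) :
    ∃ χ : (ResidueField R)ˣ →* Γ,
      χ.comp ((residueUnits R).comp (CommGroup.torsion Rˣ).subtype) = φ := by
  set ρ := (residueUnits R).comp (CommGroup.torsion Rˣ).subtype
  have hsurj : Function.Surjective ρ := fun a ↦
    let ⟨z, hz, hza⟩ := exists_mem_torsion_residueUnits_eq a
    ⟨⟨z, hz⟩, hza⟩
  have hker : ρ.ker ≤ φ.ker := by
    intro t ht
    obtain ⟨n, hn⟩ := exists_pow_char_pow_eq_one_of_residueUnits_eq_one p ht t.2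
    have htn : t ^ p ^ n = 1 := Subtype.ext hn
    exact hΓ _ n (by rw [← map_pow, htn, map_one])
  exact ⟨ρ.liftOfSurjective hsurj ⟨φ, hker⟩, ρ.liftOfRightInverse_comp _ _ ⟨φ, hker⟩⟩

end LocalRing

theorem eq_zero_of_zpow_eq_units_map {R : Type*} [CommRing R] {K : Type*} [CommRing K] [Algebra R K]
    [FaithfulSMul R K] {ϖ : R} (hϖ : ¬ IsUnit ϖ) {π : Kˣ} (hπ : (π : K) = algebraMap R K ϖ)
    {n : ℤ} {u : Rˣ} (h : π ^ n = Units.map (algebraMap R K : R →* K) u) : n = 0 := by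
  have eq_zero_of_nat (k : ℕ) (v : Rˣ)
      (hv : π ^ k = Units.map (algebraMap R K : R →* K) v) : k = 0 := by
    have hk : ϖ ^ k = v := FaithfulSMul.algebraMap_injective R K <| by
      simpa [hπ] using congrArg Units.val hv
    by_contra hk0
    exact hϖ ((isUnit_pow_iff hk0).mp (hk ▸ v.isUnit))
  obtain ⟨k, rfl | rfl⟩ := n.eq_nat_or_neg
  · simpa using eq_zero_of_nat k u (by simpa using h)
  · simpa using eq_zero_of_nat k u⁻¹ (by rw [map_inv, ← h, zpow_neg, inv_inv, zpow_natCast])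

section FractionField

variable {R : Type*} [CommRing R] [IsDomain R] [IsDiscreteValuationRing R]
  {K : Type*} [Field K] [Algebra R K] [IsFractionRing R K] {ϖ : R} {π : Kˣ}

theorem bijective_zpowersHom_coprod_units_map (hϖ : Irreducible ϖ)
    (hπ : (π : K) = algebraMap R K ϖ) :
    Function.Bijective
      ((zpowersHom Kˣ π).coprod (Units.map (algebraMap R K : R →* K))) := by
  constructor
  · rw [injective_iff_map_eq_one]
    rintro ⟨n, u⟩ h
    have hn : π ^ n.toAdd = Units.map (algebraMap R K : R →* K) u⁻¹ := by
      rw [map_inv]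
      exact eq_inv_of_mul_eq_one_left h
    have hn0 := eq_zero_of_zpow_eq_units_map hϖ.not_isUnit hπ hn
    have hu : u⁻¹ = 1 := Units.map_injective (IsFractionRing.injective R K) <| by
      rw [map_one]
      exact (hn.symm.trans (by rw [hn0, zpow_zero]) :)
    exact Prod.ext hn0 (inv_eq_one.mp hu)
  · intro x
    obtain ⟨n, u, hx⟩ :=
      IsDiscreteValuationRing.exists_units_eq_smul_zpow_of_irreducible hϖ x.ne_zero
    refine ⟨(Multiplicative.ofAdd n, u), Units.ext ?_⟩
    simp [hx, hπ, Units.smul_def, Algebra.smul_def, mul_comm]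

theorem existsUnique_hom_apply_uniformizer_and_comp_units_map {Γ : Type*} [CommGroup Γ]
    (hϖ : Irreducible ϖ) (hπ : (π : K) = algebraMap R K ϖ) (γ : Γ) (ψ : Rˣ →* Γ) :
    ∃! f : Kˣ →* Γ, f π = γ ∧ f.comp (Units.map (algebraMap R K : R →* K)) = ψ := by
  let e : Multiplicative ℤ × Rˣ ≃* Kˣ :=
    MulEquiv.ofBijective _ (bijective_zpowersHom_coprod_units_map hϖ hπ)
  have he : ∀ n u, e (n, u) = π ^ n.toAdd * Units.map (algebraMap R K : R →* K) u :=
    fun _ _ ↦ rfl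
  refine ⟨((zpowersHom Γ γ).coprod ψ).comp e.symm.toMonoidHom, ⟨?_, ?_⟩, ?_⟩
  · have hπe : e.symm π = (Multiplicative.ofAdd 1, 1) := by simp [e.symm_apply_eq, he]
    simp [hπe]
  · ext u
    have hue : e.symm (Units.map (algebraMap R K : R →* K) u) = (1, u) := by
      simp [e.symm_apply_eq, he]
    simp [hue]
  · rintro f ⟨hfπ, hfu⟩
    ext x
    obtain ⟨⟨n, u⟩, rfl⟩ := e.surjective x
    have hfe : f (e (n, u)) = γ ^ n.toAdd * ψ u := by
      rw [he, map_mul, map_zpow, hfπ, ← hfu, MonoidHom.comp_apply]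
    simpa using hfe

end FractionField

theorem continuous_of_ker_mem_nhds_one {G H : Type*} [Group G] [TopologicalSpace G]
    [ContinuousMul G] [Group H] [TopologicalSpace H] (f : G →* H)
    (hf : (f.ker : Set G) ∈ 𝓝 1) : Continuous f := by
  refine ((IsLocallyConstant.iff_eventually_eq f).mpr fun x ↦ ?_).continuous
  have hx : Tendsto (x⁻¹ * ·) (𝓝 x) (𝓝 1) := by
    simpa using (continuous_const_mul x⁻¹).tendsto x
  filter_upwards [hx hf] with y hy
  exact f.eq_iff.mpr hy

section AdicTopology

variable {R : Type*} [CommRing R] [TopologicalSpace R]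

theorem tendsto_pow_pow_of_sub_one_mem {I : Ideal R} (hI : IsAdic I) {p : ℕ} (hp : (p : R) ∈ I)
    {x : R} (hx : x - 1 ∈ I) : Tendsto (fun n : ℕ ↦ x ^ p ^ n) atTop (𝓝 1) := by
  rw [(hI.hasBasis_nhds 1).tendsto_right_iff]
  intro N _
  filter_upwards [eventually_ge_atTop N] with n hn
  have hmem : x ^ p ^ n - 1 ∈ I ^ (n + 1) := by
    simpa [SModEq.sub_mem] using (SModEq.sub_mem.mpr hx).pow_pow_add_one hp n
  exact ⟨_, Ideal.pow_le_pow_right (hn.trans n.le_succ) hmem, add_sub_cancel _ _⟩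

variable [IsLocalRing R] {p : ℕ} [CharP (ResidueField R) p]

theorem tendsto_pow_char_pow_of_residueUnits_eq_one (hR : IsAdic (maximalIdeal R)) {u : Rˣ}
    (hu : residueUnits R u = 1) : Tendsto (fun n : ℕ ↦ u ^ p ^ n) atTop (𝓝 1) := by
  have hp : (p : R) ∈ maximalIdeal R := by
    rw [← residue_eq_zero_iff, map_natCast, CharP.cast_eq_zero]
  have hlim {v : Rˣ} (hv : residueUnits R v = 1) :=
    tendsto_pow_pow_of_sub_one_mem hR hp (residueUnits_eq_one_iff.mp hv)
  rw [Units.isEmbedding_embedProduct.tendsto_nhds_iff]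
  refine (hlim hu).prodMk_nhds ?_
  simpa [Function.comp_def] using
    (MulOpposite.continuous_op.tendsto 1).comp (hlim (v := u⁻¹) (by simp [hu]))

theorem map_eq_one_of_residueUnits_eq_one {Γ : Type*} [Monoid Γ] [TopologicalSpace Γ]
    (hR : IsAdic (maximalIdeal R))
    (hΓ : ∀ g : Γ, Tendsto (fun n : ℕ ↦ g ^ p ^ n) atTop (𝓝 1) → g = 1)
    {f : Rˣ →* Γ} (hf : Continuous f) {u : Rˣ} (hu : residueUnits R u = 1) : f u = 1 := by
  refine hΓ _ ?_
  simpa [Function.comp_def] using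
    (hf.tendsto 1).comp (tendsto_pow_char_pow_of_residueUnits_eq_one (p := p) hR hu)

end AdicTopology

section Characters

variable {R : Type*} [CommRing R] [TopologicalSpace R]
  {Γ : Type*} [TopologicalSpace Γ]

theorem hom_units_ext_of_eqOn_torsion [HenselianLocalRing R] [Finite (ResidueField R)] {p : ℕ}
    [CharP (ResidueField R) p] [Group Γ] (hR : IsAdic (maximalIdeal R))
    (hΓ : ∀ g : Γ, Tendsto (fun n : ℕ ↦ g ^ p ^ n) atTop (𝓝 1) → g = 1)
    {f g : Rˣ →* Γ} (hf : Continuous f) (hg : Continuous g)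
    (h : Set.EqOn f g (CommGroup.torsion Rˣ)) : f = g := by
  ext u
  obtain ⟨t, ht, htu⟩ := exists_mem_torsion_residueUnits_eq (residueUnits R u)
  have hw : residueUnits R (t⁻¹ * u) = 1 := by rw [map_mul, map_inv, htu, inv_mul_cancel]
  rw [← mul_inv_cancel_left t u, map_mul f, map_mul g, h ht,
    map_eq_one_of_residueUnits_eq_one hR hΓ hf hw, map_eq_one_of_residueUnits_eq_one hR hΓ hg hw]

theorem continuous_of_map_eq_one_of_residueUnits_eq_one [IsLocalRing R] {K : Type*} [CommRing K]
    [TopologicalSpace K] [ContinuousMul K] [Algebra R K] [Group Γ]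
    (hR : IsAdic (maximalIdeal R)) (hRK : IsOpenMap (algebraMap R K)) {f : Kˣ →* Γ}
    (hf : ∀ u : Rˣ, residueUnits R u = 1 → f (Units.map (algebraMap R K : R →* K) u) = 1) :
    Continuous f := by
  refine continuous_of_ker_mem_nhds_one f ?_
  have hnhds : {r : R | r - 1 ∈ maximalIdeal R} ∈ 𝓝 1 := by
    refine (hR.hasBasis_nhds 1).mem_iff.mpr ⟨1, trivial, ?_⟩
    rintro _ ⟨s, hs, rfl⟩
    simpa using hs
  have hnhdsK : algebraMap R K '' {r : R | r - 1 ∈ maximalIdeal R} ∈ 𝓝 ((1 : Kˣ) : K) := by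
    simpa using hRK.image_mem_nhds hnhds
  filter_upwards [Units.continuous_val.continuousAt.preimage_mem_nhds hnhdsK]
  rintro x ⟨r, hr, hrx⟩
  have hres : residue R r = 1 := by
    rw [← map_one (residue R)]
    exact residue_eq_residue_iff_sub_mem.mpr hr
  obtain ⟨u, rfl⟩ : IsUnit r := by
    rw [← residue_ne_zero_iff_isUnit, hres]
    exact one_ne_zero
  have hxu : x = Units.map (algebraMap R K : R →* K) u := Units.ext hrx.symm
  rw [hxu]
  exact hf u (residueUnits_eq_one_iff.mpr hr)

end Characters

theorem tendsto_pow_pow_of_pow_pow_eq_one {Γ : Type*} [Monoid Γ] [TopologicalSpace Γ] {p n : ℕ}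
    {g : Γ} (hg : g ^ p ^ n = 1) : Tendsto (fun k : ℕ ↦ g ^ p ^ k) atTop (𝓝 1) := by
  refine tendsto_const_nhds.congr' ?_
  filter_upwards [eventually_ge_atTop n] with k hk
  obtain ⟨j, rfl⟩ := Nat.exists_eq_add_of_le hk
  rw [pow_add, pow_mul, hg, one_pow]

theorem eq_one_of_tendsto_pow_prime_pow_of_not_dvd_card {Γ : Type*} [Group Γ] [TopologicalSpace Γ]
    [DiscreteTopology Γ] {p : ℕ} [Fact p.Prime] (hp : ¬ p ∣ Nat.card Γ) {g : Γ}
    (hg : Tendsto (fun n : ℕ ↦ g ^ p ^ n) atTop (𝓝 1)) : g = 1 := by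
  rw [nhds_discrete, tendsto_pure] at hg
  obtain ⟨n, hn⟩ := hg.exists
  have hcoprime : (Nat.card Γ).Coprime (p ^ n) :=
    (((Fact.out : p.Prime).coprime_iff_not_dvd.mpr hp).pow_left n).symm
  exact (powCoprime hcoprime).injective (hn.trans (one_pow _).symm)

section PadicInt

variable (p : ℕ) [Fact p.Prime]

instance henselianLocalRing_padicInt : HenselianLocalRing ℤ_[p] :=
  henselianLocalRing_of_isAdicComplete

instance charP_residueField_padicInt : CharP (ResidueField ℤ_[p]) p :=
  charP_of_injective_ringHom (f := (PadicInt.residueField (p := p)).symm.toRingHom)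
    (PadicInt.residueField (p := p)).symm.injective p

theorem isAdic_maximalIdeal_padicInt : IsAdic (maximalIdeal ℤ_[p]) := by
  refine isAdic_iff.mpr ⟨isOpen_maximalIdeal_pow ℤ_[p], fun s hs ↦ ?_⟩
  obtain ⟨ε, hε, hεs⟩ := Metric.mem_nhds_iff.mp hs
  obtain ⟨n, hn⟩ := PadicInt.exists_pow_neg_lt p hε
  refine ⟨n, fun x hx ↦ hεs ?_⟩
  rw [PadicInt.maximalIdeal_eq_span_p, Ideal.span_singleton_pow, SetLike.mem_coe,
    ← PadicInt.norm_le_pow_iff_mem_span_pow] at hx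
  exact mem_ball_zero_iff.mpr (hx.trans_lt hn)

end PadicInt

-- For finite discrete `Γ`, `hΓ` says that `p` does not divide the order of `Γ`; it also allows
-- infinite targets such as the additive group of `ℤ_[ℓ]` for primes `ℓ ≠ p`.
theorem continuous_hom_padic_units_equiv_general {R : Type*} [CommRing R] [IsDomain R]
    [IsDiscreteValuationRing R] [HenselianLocalRing R] [Finite (ResidueField R)]
    [TopologicalSpace R] (hR : IsAdic (maximalIdeal R)) {p : ℕ} [CharP (ResidueField R) p]
    {K : Type*} [Field K] [TopologicalSpace K] [ContinuousMul K] [Algebra R K]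
    [IsFractionRing R K] (hRK : IsOpenEmbedding (algebraMap R K))
    {ϖ : R} (hϖ : Irreducible ϖ) {π : Kˣ} (hπ : (π : K) = algebraMap R K ϖ)
    {Γ : Type*} [CommGroup Γ] [TopologicalSpace Γ]
    (hΓ : ∀ g : Γ, Tendsto (fun n : ℕ ↦ g ^ p ^ n) atTop (𝓝 1) → g = 1) :
    Function.Bijective
      (fun f : {f : Kˣ →* Γ // Continuous f} ↦
        ((f : Kˣ →* Γ) π,
          (f : Kˣ →* Γ).comp
            ((Units.map (algebraMap R K : R →* K)).comp (CommGroup.torsion Rˣ).subtype))) := by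
  constructor
  · rintro ⟨f, hf⟩ ⟨g, hg⟩ h
    obtain ⟨hfg, htors⟩ := Prod.mk.inj h
    have hι : Continuous (Units.map (algebraMap R K : R →* K)) :=
      Units.continuous_map hRK.continuous
    have hunits : f.comp (Units.map (algebraMap R K : R →* K)) = g.comp (Units.map _) :=
      hom_units_ext_of_eqOn_torsion hR hΓ (hf.comp hι) (hg.comp hι)
        fun t ht ↦ DFunLike.congr_fun htors ⟨t, ht⟩
    exact Subtype.ext <| (existsUnique_hom_apply_uniformizer_and_comp_units_map hϖ hπ _ _).unique
      ⟨hfg, hunits⟩ ⟨rfl, rfl⟩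
  · rintro ⟨γ, φ⟩
    have hprimary (g : Γ) (n : ℕ) (hg : g ^ p ^ n = 1) : g = 1 :=
      hΓ g (tendsto_pow_pow_of_pow_pow_eq_one hg)
    obtain ⟨χ, rfl⟩ := exists_hom_comp_residueUnits_torsion_eq hprimary φ
    obtain ⟨f, ⟨hfπ, hfu⟩, -⟩ :=
      existsUnique_hom_apply_uniformizer_and_comp_units_map hϖ hπ γ (χ.comp (residueUnits R))
    have hf : Continuous f :=
      continuous_of_map_eq_one_of_residueUnits_eq_one hR hRK.isOpenMap fun u hu ↦ by
        simpa [hu] using DFunLike.congr_fun hfu u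
    exact ⟨⟨f, hf⟩, Prod.ext hfπ (congrArg (·.comp (CommGroup.torsion Rˣ).subtype) hfu)⟩

/-- For a prime `p` and a finite abelian group `Γ` (discrete) of order prime to `p`, the map
sending a continuous group homomorphism `f : ℚ_pˣ → Γ` to the pair consisting of `f(p)` and the
restriction of `f` to the torsion subgroup of `ℤ_pˣ` is a bijection onto
`Γ × Hom(torsion(ℤ_pˣ), Γ)`. -/
theorem continuous_hom_padic_units_equiv
    {p : ℕ} [Fact p.Prime] (Γ : Type*) [CommGroup Γ] [Finite Γ]
    [TopologicalSpace Γ] [DiscreteTopology Γ]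
    (hΓ : ¬ (p ∣ Nat.card Γ)) :
    Function.Bijective
      (fun f : {f : ℚ_[p]ˣ →* Γ // Continuous f} =>
        ((f : ℚ_[p]ˣ →* Γ)
            (Units.mk0 (p : ℚ_[p]) (by exact_mod_cast (Fact.out : p.Prime).ne_zero)),
         (f : ℚ_[p]ˣ →* Γ).comp
            ((Units.map (PadicInt.Coe.ringHom (p := p)).toMonoidHom).comp
              (CommGroup.torsion ℤ_[p]ˣ).subtype))
        : {f : ℚ_[p]ˣ →* Γ // Continuous f} → Γ × (CommGroup.torsion ℤ_[p]ˣ →* Γ)) :=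
  continuous_hom_padic_units_equiv_general (isAdic_maximalIdeal_padicInt p)
    PadicInt.isOpenEmbedding_coe PadicInt.irreducible_p rfl
    fun _ ↦ eq_one_of_tendsto_pow_prime_pow_of_not_dvd_card hΓ
end

section
/- Let p be a prime, d a positive integer dividing p − 1, and e an integer with 1 ≤ e ≤ d. Let μ be the Haar measure on the additive group ℚ_p normalized so that μ(ℤ_p) = 1, and let S = { z^d · p^e : z ∈ ℤ_p } ⊆ ℚ_p. Then ∫_S ‖x‖_p^{(1−d)/d} dμ(x) = (1/d) · p^{−e/d}, where ‖·‖_p is the p-adic norm (valued in the nonnegative reals) and the exponents denote real powers. -/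
/-!
The nonzero points `zᵈ c` fall, according to the valuation `k` of `z`, into the disjoint shells
`c p^(dk) • (ℤ_pˣ)ᵈ`. Multiplication by `a` scales Haar measure by `‖a‖` (balls of radius `‖p‖` tile
`ℤ_p` in `p` copies), so the integral of `‖x‖^(1/d - 1)` over `a • (ℤ_pˣ)ᵈ` is
`‖a‖^(1/d) μ((ℤ_pˣ)ᵈ)`, and the shells sum to a geometric series of ratio `1/p`. By Hensel's lemma
`(ℤ_pˣ)ᵈ` is the preimage of the `d`-th powers in `𝔽_pˣ`, so its measure is
`(1 - 1/p) / gcd(p - 1, d)`; the factor `1 - 1/p` cancels the sum of the geometric series.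
-/

open MeasureTheory

namespace PadicOrbifold

open Metric Set
open scoped Pointwise ENNReal NNReal

section Residue

open IsLocalRing Polynomial in
theorem exists_pow_eq_iff_exists_pow_eq_map {R K : Type*} [CommRing R] [IsLocalRing R]
    [HenselianRing R (maximalIdeal R)] [Field K] {φ : R →+* K} (hφ : Function.Surjective φ)
    {d : ℕ} (hd : (d : K) ≠ 0) (u : Rˣ) :
    (∃ v : Rˣ, v ^ d = u) ↔ ∃ b : Kˣ, b ^ d = Units.map φ u := by
  have hlocal : IsLocalHom φ := hφ.isLocalHom
  constructor
  · rintro ⟨v, rfl⟩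
    exact ⟨Units.map φ v, (map_pow _ v d).symm⟩
  · rintro ⟨b, hb⟩
    obtain ⟨c, rfl⟩ := surjective_units_map_of_local_ringHom φ hφ hlocal b
    have hd0 : d ≠ 0 := fun h => hd (by simp [h])
    have hdR : IsUnit (d : R) := isUnit_of_map_unit φ _ (by simpa using hd)
    have hroot : (X ^ d - C (u : R)).eval (c : R) ∈ maximalIdeal R := by
      rw [← ker_eq_maximalIdeal φ hφ, RingHom.mem_ker]
      simpa [sub_eq_zero] using congrArg Units.val hb
    have hsimple : IsUnit ((X ^ d - C (u : R)).derivative.eval (c : R)) := by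
      simpa [derivative_X_pow] using hdR.mul (c.isUnit.pow (d - 1))
    obtain ⟨z, hz, -⟩ := HenselianRing.is_henselian (X ^ d - C (u : R))
      (monic_X_pow_sub_C (u : R) hd0) c hroot (hsimple.map _)
    have hzu : z ^ d = u := by simpa [IsRoot.def, sub_eq_zero] using hz
    obtain ⟨v, rfl⟩ : IsUnit z := (isUnit_pow_iff hd0).1 (hzu ▸ u.isUnit)
    exact ⟨v, Units.ext hzu⟩

theorem ncard_range_units_pow (K : Type*) [Field K] [Finite K] (d : ℕ) :
    (range fun b : Kˣ => (b : K) ^ d).ncard = (Nat.card K - 1) / (Nat.card K - 1).gcd d := by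
  have hrange : (range fun b : Kˣ => (b : K) ^ d)
      = Units.val '' ((powMonoidHom d : Kˣ →* Kˣ).range : Set Kˣ) := by
    rw [MonoidHom.coe_range, ← range_comp]
    rfl
  rw [hrange, ncard_image_of_injective _ Units.val_injective, ← Nat.card_coe_set_eq,
    ← Nat.card_units K, ← IsCyclic.card_powMonoidHom_range (G := Kˣ) d]
  rfl

end Residue

section Shells

variable {K : Type*} [NormedField K] {U : Set K}

theorem norm_eq_of_mem_smul (hU1 : ∀ x ∈ U, ‖x‖ = 1) {c x : K} (hx : x ∈ c • U) : ‖x‖ = ‖c‖ := by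
  obtain ⟨u, hu, rfl⟩ := hx
  simp [hU1 u hu]

theorem pairwise_disjoint_mul_pow_smul (hU1 : ∀ x ∈ U, ‖x‖ = 1) {c q : K} (hc : c ≠ 0)
    (hq0 : q ≠ 0) (hq1 : ‖q‖ < 1) :
    Pairwise (Function.onFun Disjoint fun k : ℕ => (c * q ^ k) • U) := by
  intro k l hkl
  refine disjoint_left.2 fun x hxk hxl => hkl ?_
  have hnorm := (norm_eq_of_mem_smul hU1 hxk).symm.trans (norm_eq_of_mem_smul hU1 hxl)
  rw [norm_mul, norm_mul, norm_pow, norm_pow, mul_right_inj' (norm_ne_zero_iff.2 hc)] at hnorm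
  exact pow_right_injective₀ (norm_pos_iff.2 hq0) hq1.ne hnorm

theorem integrableOn_norm_rpow_smul [ProperSpace K] [MeasurableSpace K] [BorelSpace K]
    (μ : Measure K) [IsFiniteMeasureOnCompacts μ] (hU : MeasurableSet U)
    (hU1 : ∀ x ∈ U, ‖x‖ = 1) {c : K} (hc : c ≠ 0) (s : ℝ) :
    IntegrableOn (fun x => ‖x‖ ^ s) (c • U) μ := by
  have hsub : c • U ⊆ closedBall 0 ‖c‖ := fun x hx => by simp [norm_eq_of_mem_smul hU1 hx]
  have hfinite : μ (c • U) ≠ ∞ := measure_ne_top_of_subset hsub measure_closedBall_lt_top.ne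
  refine (integrableOn_const (C := ‖c‖ ^ s) hfinite).congr_fun (fun x hx => ?_)
    (hU.const_smul_of_ne_zero hc)
  simp only [norm_eq_of_mem_smul hU1 hx]

end Shells

variable {p : ℕ} [Fact p.Prime]

variable (p) in
/-- The set `(ℤ_pˣ)ᵈ` of `d`-th powers of `p`-adic units, as a subset of `ℚ_p`. -/
def unitPowers (d : ℕ) : Set ℚ_[p] := range fun u : ℤ_[p]ˣ => ((u : ℤ_[p]) : ℚ_[p]) ^ d

/-- The set of `p`-adic integers whose reduction modulo `p` lies in `A`, as a subset of `ℚ_p`. -/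
def integersReducingTo (A : Set (ZMod p)) : Set ℚ_[p] :=
  (fun z : ℤ_[p] => (z : ℚ_[p])) '' (PadicInt.toZMod ⁻¹' A)

theorem setOf_pow_mul_eq_insert_iUnion {d : ℕ} (hd : d ≠ 0) (c : ℚ_[p]) :
    {x : ℚ_[p] | ∃ z : ℤ_[p], (z : ℚ_[p]) ^ d * c = x}
      = insert 0 (⋃ k : ℕ, (c * ((p : ℚ_[p]) ^ d) ^ k) • unitPowers p d) := by
  ext x
  simp only [unitPowers, ← range_smul, mem_insert_iff, mem_iUnion, mem_range, mem_ofPred_eq,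
    smul_eq_mul]
  constructor
  · rintro ⟨z, rfl⟩
    rcases eq_or_ne z 0 with rfl | hz
    · simp [hd]
    · refine .inr ⟨z.valuation, PadicInt.unitCoeff hz, ?_⟩
      conv_rhs => rw [PadicInt.unitCoeff_spec hz]
      push_cast
      ring
  · rintro (rfl | ⟨k, u, rfl⟩)
    · exact ⟨0, by simp [hd]⟩
    · exact ⟨u * p ^ k, by push_cast; ring⟩

theorem norm_eq_one_of_mem_unitPowers {d : ℕ} {x : ℚ_[p]} (hx : x ∈ unitPowers p d) :
    ‖x‖ = 1 := by
  obtain ⟨u, rfl⟩ := hx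
  simp

theorem isCompact_unitPowers (d : ℕ) : IsCompact (unitPowers p d) :=
  isCompact_range (by fun_prop)

theorem unitPowers_eq_integersReducingTo {d : ℕ} (hd : ¬ p ∣ d) :
    unitPowers p d = integersReducingTo (range fun b : (ZMod p)ˣ => (b : ZMod p) ^ d) := by
  have hensel (u : ℤ_[p]ˣ) := exists_pow_eq_iff_exists_pow_eq_map
    (ZMod.ringHom_surjective (PadicInt.toZMod (p := p))) (mt (ZMod.natCast_eq_zero_iff d p).1 hd) u
  ext x
  constructor
  · rintro ⟨u, rfl⟩
    obtain ⟨b, hb⟩ := (hensel (u ^ d)).1 ⟨u, rfl⟩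
    exact ⟨(u ^ d : ℤ_[p]ˣ), ⟨b, congrArg Units.val hb⟩, by simp⟩
  · rintro ⟨w, ⟨b, hb : (b : ZMod p) ^ d = PadicInt.toZMod w⟩, rfl⟩
    obtain ⟨u, rfl⟩ : IsUnit w := isUnit_of_map_unit PadicInt.toZMod w (hb ▸ b.isUnit.pow d)
    obtain ⟨v, rfl⟩ := (hensel u).2 ⟨b, Units.ext hb⟩
    exact ⟨v, by simp⟩

theorem integersReducingTo_univ :
    integersReducingTo (univ : Set (ZMod p)) = closedBall (0 : ℚ_[p]) 1 := by
  ext x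
  constructor
  · rintro ⟨w, -, rfl⟩
    simpa using w.norm_le_one
  · intro hx
    exact ⟨⟨x, by simpa using hx⟩, mem_univ _, rfl⟩

theorem integersReducingTo_singleton (u : ℤ_[p]) :
    integersReducingTo {PadicInt.toZMod u} = closedBall (u : ℚ_[p]) ‖(p : ℚ_[p])‖ := by
  have reduces_iff (w : ℤ_[p]) : PadicInt.toZMod w = PadicInt.toZMod u ↔
      (w : ℚ_[p]) ∈ closedBall (u : ℚ_[p]) ‖(p : ℚ_[p])‖ := by
    have h := PadicInt.norm_le_pow_iff_mem_span_pow (w - u) 1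
    rw [← sub_eq_zero, ← map_sub, ← RingHom.mem_ker, PadicInt.ker_toZMod,
      PadicInt.maximalIdeal_eq_span_p, mem_closedBall_iff_norm, Padic.norm_p, ← PadicInt.coe_sub,
      PadicInt.padic_norm_e_of_padicInt]
    simpa using h.symm
  have subset_integers : closedBall (u : ℚ_[p]) ‖(p : ℚ_[p])‖ ⊆ closedBall 0 1 := by
    have hu : (u : ℚ_[p]) ∈ closedBall 0 1 := by simpa using u.norm_le_one
    rw [IsUltrametricDist.closedBall_eq_of_mem hu]
    exact closedBall_subset_closedBall Padic.norm_p_lt_one.le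
  ext x
  constructor
  · rintro ⟨w, hw, rfl⟩
    exact (reduces_iff w).1 hw
  · intro hx
    have hx1 : ‖x‖ ≤ 1 := by simpa using subset_integers hx
    exact ⟨⟨x, hx1⟩, (reduces_iff ⟨x, hx1⟩).2 hx, rfl⟩

theorem pairwise_disjoint_integersReducingTo_singleton :
    Pairwise (Function.onFun Disjoint fun a : ZMod p => integersReducingTo {a}) := by
  intro a b hab
  exact (disjoint_image_iff Subtype.val_injective).2 (.preimage _ (by simpa using hab))

section Measure

variable [MeasurableSpace ℚ_[p]] [BorelSpace ℚ_[p]] (μ : Measure ℚ_[p]) [μ.IsAddHaarMeasure]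

theorem measure_integersReducingTo_eq_ncard_mul (A : Set (ZMod p)) :
    μ (integersReducingTo A) = A.ncard * μ (closedBall 0 ‖(p : ℚ_[p])‖) := by
  have eq_closedBall (a : ZMod p) :
      ∃ u : ℚ_[p], integersReducingTo {a} = closedBall u ‖(p : ℚ_[p])‖ := by
    obtain ⟨u, rfl⟩ := ZMod.ringHom_surjective PadicInt.toZMod a
    exact ⟨u, integersReducingTo_singleton u⟩
  choose u hu using eq_closedBall
  have hA : integersReducingTo A = ⋃ a ∈ A.toFinite.toFinset, integersReducingTo {a} := by
    simp only [integersReducingTo, Finite.mem_toFinset, ← image_iUnion₂, ← preimage_iUnion₂,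
      biUnion_of_singleton]
  rw [hA, measure_biUnion_finset
    (fun a _ b _ hab => pairwise_disjoint_integersReducingTo_singleton hab)
    (fun a _ => hu a ▸ measurableSet_closedBall)]
  simp [hu, Measure.addHaar_closedBall_center, ncard_eq_toFinset_card A]

theorem measure_closedBall_zero_norm (c : ℚ_[p]ˣ) :
    μ (closedBall 0 ‖(c : ℚ_[p])‖) = distribHaarChar ℚ_[p] c * μ (closedBall 0 1) := by
  rw [distribHaarChar_mul, Units.smul_def, smul_closedBall' c.ne_zero, smul_zero, mul_one]

end Measure

theorem distribHaarChar_eq_of_norm_eq {c c' : ℚ_[p]ˣ} (h : ‖(c : ℚ_[p])‖ = ‖(c' : ℚ_[p])‖) :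
    distribHaarChar ℚ_[p] c = distribHaarChar ℚ_[p] c' := by
  borelize ℚ_[p]
  have hball := measure_closedBall_zero_norm Measure.addHaar c
  rw [h, measure_closedBall_zero_norm, ENNReal.mul_left_inj
    (measure_closedBall_pos _ _ one_pos).ne' measure_closedBall_lt_top.ne] at hball
  exact_mod_cast hball.symm

theorem distribHaarChar_eq_nnnorm_of_coe_eq_p {c : ℚ_[p]ˣ} (hc : (c : ℚ_[p]) = p) :
    distribHaarChar ℚ_[p] c = ‖(c : ℚ_[p])‖₊ := by
  borelize ℚ_[p]
  have hcover := measure_integersReducingTo_eq_ncard_mul Measure.addHaar (univ : Set (ZMod p))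
  rw [integersReducingTo_univ, ncard_univ, Nat.card_zmod, ← hc, measure_closedBall_zero_norm,
    ← mul_assoc, eq_comm, ENNReal.mul_eq_right
    (measure_closedBall_pos _ _ one_pos).ne' measure_closedBall_lt_top.ne] at hcover
  have hmul : (p : ℝ≥0) * distribHaarChar ℚ_[p] c = 1 := by exact_mod_cast hcover
  rw [eq_inv_of_mul_eq_one_right hmul, hc]
  ext
  simp

theorem distribHaarChar_eq_nnnorm (c : ℚ_[p]ˣ) : distribHaarChar ℚ_[p] c = ‖(c : ℚ_[p])‖₊ := by
  have hp0 : (p : ℚ_[p]) ≠ 0 := mod_cast (Fact.out : p.Prime).ne_zero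
  let P := Units.mk0 (p : ℚ_[p]) hp0
  have hnorm : ‖(c : ℚ_[p])‖ = ‖((P ^ (c : ℚ_[p]).valuation : ℚ_[p]ˣ) : ℚ_[p])‖ := by
    simp [P, Padic.norm_eq_zpow_neg_valuation c.ne_zero]
  rw [distribHaarChar_eq_of_norm_eq hnorm, map_zpow, distribHaarChar_eq_nnnorm_of_coe_eq_p rfl]
  ext
  simp [hnorm]

section Measure

variable [MeasurableSpace ℚ_[p]] [BorelSpace ℚ_[p]] (μ : Measure ℚ_[p]) [μ.IsAddHaarMeasure]

theorem measureReal_smul {c : ℚ_[p]} (hc : c ≠ 0) (s : Set ℚ_[p]) :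
    μ.real (c • s) = ‖c‖ * μ.real s := by
  have h := distribHaarChar_mul μ (Units.mk0 c hc) s
  rw [distribHaarChar_eq_nnnorm, Units.smul_mk0] at h
  rw [Measure.real, ← h]
  simp [Measure.real]

theorem measureReal_integersReducingTo (A : Set (ZMod p)) :
    μ.real (integersReducingTo A) = A.ncard / p * μ.real (closedBall 0 1) := by
  have hp0 : (p : ℚ_[p]) ≠ 0 := mod_cast (Fact.out : p.Prime).ne_zero
  have hball := measureReal_smul μ hp0 (closedBall 0 1)
  rw [smul_closedBall' hp0, smul_zero, mul_one] at hball
  rw [Measure.real, measure_integersReducingTo_eq_ncard_mul, ENNReal.toReal_mul, ← Measure.real,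
    hball, Padic.norm_p, ENNReal.toReal_natCast, div_eq_mul_inv, mul_assoc]

theorem measureReal_unitPowers {d : ℕ} (hd : ¬ p ∣ d) :
    μ.real (unitPowers p d) = (1 - (p : ℝ)⁻¹) / (p - 1).gcd d * μ.real (closedBall 0 1) := by
  have hp := (Fact.out : p.Prime)
  have hgcd : ((p - 1).gcd d : ℝ) ≠ 0 := by
    exact_mod_cast (Nat.gcd_pos_of_pos_left d (Nat.sub_pos_of_lt hp.one_lt)).ne'
  have hp0 : (p : ℝ) ≠ 0 := mod_cast hp.ne_zero
  rw [unitPowers_eq_integersReducingTo hd, measureReal_integersReducingTo, ncard_range_units_pow,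
    Nat.card_zmod, Nat.cast_div (Nat.gcd_dvd_left _ _) hgcd, Nat.cast_pred hp.pos]
  field_simp

theorem setIntegral_norm_rpow_smul {U : Set ℚ_[p]} (hU : MeasurableSet U)
    (hU1 : ∀ x ∈ U, ‖x‖ = 1) {c : ℚ_[p]} (hc : c ≠ 0) (s : ℝ) :
    ∫ x in c • U, ‖x‖ ^ (s - 1) ∂μ = ‖c‖ ^ s * μ.real U := by
  have hconst : EqOn (fun x => ‖x‖ ^ (s - 1)) (fun _ => ‖c‖ ^ (s - 1)) (c • U) := fun x hx => by
    simp only [norm_eq_of_mem_smul hU1 hx]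
  rw [setIntegral_congr_fun (hU.const_smul_of_ne_zero hc) hconst, setIntegral_const,
    measureReal_smul μ hc, smul_eq_mul, Real.rpow_sub_one (norm_ne_zero_iff.2 hc)]
  field_simp

theorem setIntegral_norm_rpow_iUnion_smul {U : Set ℚ_[p]} (hU : MeasurableSet U)
    (hU1 : ∀ x ∈ U, ‖x‖ = 1) {c q : ℚ_[p]} (hc : c ≠ 0) (hq0 : q ≠ 0) (hq1 : ‖q‖ < 1)
    {s : ℝ} (hs : 0 < s) :
    ∫ x in ⋃ k : ℕ, (c * q ^ k) • U, ‖x‖ ^ (s - 1) ∂μ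
      = ‖c‖ ^ s * μ.real U / (1 - ‖q‖ ^ s) := by
  have hck (k : ℕ) : c * q ^ k ≠ 0 := mul_ne_zero hc (pow_ne_zero k hq0)
  have hshell (k : ℕ) : ∫ x in (c * q ^ k) • U, ‖x‖ ^ (s - 1) ∂μ
      = ‖c‖ ^ s * μ.real U * (‖q‖ ^ s) ^ k := by
    rw [setIntegral_norm_rpow_smul μ hU hU1 (hck k), norm_mul, norm_pow,
      Real.mul_rpow (norm_nonneg c) (by positivity), ← Real.rpow_pow_comm (norm_nonneg q)]
    ring
  have hgeom : HasSum (fun k => ‖c‖ ^ s * μ.real U * (‖q‖ ^ s) ^ k)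
      (‖c‖ ^ s * μ.real U / (1 - ‖q‖ ^ s)) :=
    (hasSum_geometric_of_lt_one (by positivity)
      (Real.rpow_lt_one (norm_nonneg q) hq1 hs)).mul_left _
  have hnorm (x : ℚ_[p]) : ‖‖x‖ ^ (s - 1)‖ = ‖x‖ ^ (s - 1) := Real.norm_of_nonneg (by positivity)
  have hint : IntegrableOn (fun x => ‖x‖ ^ (s - 1)) (⋃ k : ℕ, (c * q ^ k) • U) μ :=
    integrableOn_iUnion_of_summable_integral_norm
      (fun k => integrableOn_norm_rpow_smul μ hU hU1 (hck k) _)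
      (by simpa only [hnorm, hshell] using hgeom.summable)
  have hsum := hasSum_integral_iUnion (fun k => hU.const_smul_of_ne_zero (hck k))
    (pairwise_disjoint_mul_pow_smul hU1 hc hq0 hq1) hint
  simp only [hshell] at hsum
  exact hsum.unique hgeom

theorem setIntegral_norm_rpow_pow_mul {d : ℕ} (hd : d ≠ 0) {c : ℚ_[p]} (hc : c ≠ 0) {s : ℝ}
    (hs : 0 < s) :
    ∫ x in {x : ℚ_[p] | ∃ z : ℤ_[p], (z : ℚ_[p]) ^ d * c = x}, ‖x‖ ^ (s - 1) ∂μ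
      = ‖c‖ ^ s * μ.real (unitPowers p d) / (1 - (p : ℝ) ^ (-(d * s))) := by
  have hp0 : (p : ℚ_[p]) ≠ 0 := mod_cast (Fact.out : p.Prime).ne_zero
  have hq1 : ‖(p : ℚ_[p]) ^ d‖ < 1 := by
    rw [norm_pow]
    exact pow_lt_one₀ (norm_nonneg _) Padic.norm_p_lt_one hd
  have hqs : ‖(p : ℚ_[p]) ^ d‖ ^ s = (p : ℝ) ^ (-(d * s)) := by
    rw [norm_pow, Padic.norm_p, inv_pow, Real.inv_rpow (by positivity),
      Real.rpow_neg p.cast_nonneg, Real.rpow_mul p.cast_nonneg, Real.rpow_natCast]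
  rw [setOf_pow_mul_eq_insert_iUnion hd, setIntegral_congr_set (insert_ae_eq_self 0 _),
    setIntegral_norm_rpow_iUnion_smul μ (isCompact_unitPowers d).measurableSet
      (fun _ => norm_eq_one_of_mem_unitPowers) hc (pow_ne_zero d hp0) hq1 hs, hqs]

end Measure

end PadicOrbifold

theorem integral_padic_orbifold_volume_general
    {p : ℕ} [Fact p.Prime] [MeasurableSpace ℚ_[p]] [BorelSpace ℚ_[p]]
    {d : ℕ} (hd : ¬ p ∣ d) {c : ℚ_[p]} (hc : c ≠ 0) (μ : Measure ℚ_[p]) [μ.IsAddHaarMeasure]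
    (hμ : μ {x : ℚ_[p] | ‖x‖ ≤ 1} = 1) :
    ∫ x in {x : ℚ_[p] | ∃ z : ℤ_[p], (z : ℚ_[p]) ^ d * c = x}, ‖x‖ ^ ((1 - (d : ℝ)) / d) ∂μ
      = 1 / ((p - 1).gcd d : ℝ) * ‖c‖ ^ (1 / (d : ℝ)) := by
  have hd0 : d ≠ 0 := fun h => hd (h ▸ dvd_zero p)
  have hdR : (d : ℝ) ≠ 0 := mod_cast hd0
  have hexp : (1 - (d : ℝ)) / d = 1 / d - 1 := by field_simp
  have hball : μ.real (Metric.closedBall (0 : ℚ_[p]) 1) = 1 := by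
    have : Metric.closedBall (0 : ℚ_[p]) 1 = {x | ‖x‖ ≤ 1} := by ext; simp
    simp [Measure.real, this, hμ]
  have hp1 : 1 - (p : ℝ)⁻¹ ≠ 0 :=
    (sub_pos.2 (inv_lt_one_of_one_lt₀ (mod_cast (Fact.out : p.Prime).one_lt))).ne'
  rw [hexp, PadicOrbifold.setIntegral_norm_rpow_pow_mul μ hd0 hc (by positivity),
    PadicOrbifold.measureReal_unitPowers μ hd, hball, mul_one_div_cancel hdR, Real.rpow_neg_one,
    mul_one, mul_div_assoc, div_div_cancel_left' hp1, mul_comm, ← one_div]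

/-- Let `p` be a prime, `d ∣ p - 1` a positive integer and `1 ≤ e ≤ d`. Let `μ` be the Haar
measure on `ℚ_p` normalized so that `μ(ℤ_p) = 1`, and let `S = {z^d · p^e : z ∈ ℤ_p}`. Then
`∫_S ‖x‖^((1-d)/d) dμ(x) = (1/d) · p^(-e/d)`. -/
theorem integral_padic_orbifold_volume
    {p : ℕ} [Fact p.Prime] [MeasurableSpace ℚ_[p]] [BorelSpace ℚ_[p]]
    (d e : ℕ) (hd : 0 < d) (hdvd : d ∣ (p - 1)) (he1 : 1 ≤ e) (he2 : e ≤ d)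
    (μ : Measure ℚ_[p]) [μ.IsAddHaarMeasure]
    (hμ : μ {x : ℚ_[p] | ‖x‖ ≤ 1} = 1) :
    ∫ x in {x : ℚ_[p] | ∃ z : ℤ_[p], (z : ℚ_[p]) ^ d * (p : ℚ_[p]) ^ e = x},
        ‖x‖ ^ ((1 - (d : ℝ)) / (d : ℝ)) ∂μ
      = (1 / (d : ℝ)) * (p : ℝ) ^ (-(e : ℝ) / (d : ℝ)) := by
  have hp := (Fact.out : p.Prime)
  have hpd : ¬ p ∣ d := fun h => by
    have := Nat.le_of_dvd (Nat.sub_pos_of_lt hp.one_lt) (h.trans hdvd)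
    have := hp.pos
    omega
  have hpe : ‖(p : ℚ_[p]) ^ e‖ ^ (1 / (d : ℝ)) = (p : ℝ) ^ (-(e : ℝ) / d) := by
    rw [Padic.norm_p_pow, ← Real.rpow_intCast, ← Real.rpow_mul p.cast_nonneg]
    push_cast
    rw [mul_one_div]
  rw [integral_padic_orbifold_volume_general hpd
    (pow_ne_zero e (mod_cast hp.ne_zero)) μ hμ, Nat.gcd_eq_right hdvd, hpe]
end

section
/- Let K be an algebraic closure of ℚ and let p be a prime. Call a family (s_r)_{r ≥ 2} of elements of K a compatible system of roots of p if s_r^r = p for all r ≥ 2 and s_{r·r′}^r = s_{r′} for all r, r′ ≥ 2. Then for any two compatible systems (s_r)_{r ≥ 2} and (s′_r)_{r ≥ 2} of roots of p there exists a field automorphism σ of K fixing ℚ such that σ(s_r) = s′_r for all r ≥ 2. -/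
/-!
For each `r` the polynomial `X ^ r - p` is irreducible by Eisenstein, so some `σ` sends `s r` to
`s' r`. Finitely many indices `r` have a common multiple `n`, and since each `s r` is a power of
`s n`, any `σ` sending `s n` to `s' n` works for all of them at once. Finally, a polynomial relation
among the `s r` involves only finitely many of them, so it also holds among the `s' r`; hence
`s r ↦ s' r` defines an embedding of `ℚ(s r : r ≥ 2)` into `K`, which extends to `K` by normality.
-/

open Polynomial

section Eisenstein

variable {R : Type*} [CommRing R] [IsDomain R] {π : R} {n : ℕ}

theorem isEisensteinAt_X_pow_sub_C (hπ : Prime π) (hn : n ≠ 0) :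
    (X ^ n - C π : R[X]).IsEisensteinAt (Ideal.span {π}) := by
  have hprime : (Ideal.span {π}).IsPrime := (Ideal.span_singleton_prime hπ.ne_zero).mpr hπ
  refine (monic_X_pow_sub_C π hn).isEisensteinAt_of_mem_of_notMem hprime.ne_top ?_ ?_
  · intro i hi
    rw [natDegree_X_pow_sub_C] at hi
    rw [coeff_sub, coeff_X_pow, if_neg hi.ne, coeff_C, zero_sub, neg_mem_iff]
    split_ifs
    exacts [Ideal.mem_span_singleton_self π, zero_mem _]
  · rw [coeff_sub, coeff_X_pow, if_neg hn.symm, coeff_C_zero, zero_sub, neg_mem_iff,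
      Ideal.span_singleton_pow, Ideal.mem_span_singleton]
    exact fun hdvd ↦ hπ.irreducible.not_isUnit (hπ.irreducible.squarefree π (sq π ▸ hdvd))

theorem irreducible_X_pow_sub_C_algebraMap_of_prime [IsIntegrallyClosed R]
    (F : Type*) [Field F] [Algebra R F] [IsFractionRing R F] (hπ : Prime π) (hn : n ≠ 0) :
    Irreducible (X ^ n - C (algebraMap R F π)) := by
  have hmonic : (X ^ n - C π).Monic := monic_X_pow_sub_C π hn
  have hirr : Irreducible (X ^ n - C π) :=
    (isEisensteinAt_X_pow_sub_C hπ hn).irreducible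
      ((Ideal.span_singleton_prime hπ.ne_zero).mpr hπ) hmonic.isPrimitive
      (natDegree_X_pow_sub_C (r := π) ▸ Nat.pos_of_ne_zero hn)
  simpa only [Polynomial.map_sub, Polynomial.map_pow, map_X, map_C] using
    (hmonic.irreducible_iff_irreducible_map_fraction_map (K := F)).mp hirr

end Eisenstein

section Normal

variable {F L ι : Type*} [Field F] [Field L] [Algebra F L]

theorem isConjRoot_of_pow_eq_of_irreducible {a : F} {n : ℕ}
    (hirr : Irreducible (X ^ n - C a)) {x y : L}
    (hx : x ^ n = algebraMap F L a) (hy : y ^ n = algebraMap F L a) : IsConjRoot F x y := by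
  have minpoly_eq {z : L} (hz : z ^ n = algebraMap F L a) : X ^ n - C a = minpoly F z :=
    minpoly.eq_of_irreducible_of_monic hirr
      (by rw [map_sub, map_pow, aeval_X, aeval_C, hz, sub_self])
      (monic_X_pow_sub_C a (ne_zero_of_irreducible_X_pow_sub_C hirr))
  exact (minpoly_eq hx).symm.trans (minpoly_eq hy)

theorem exists_algEquiv_forall_eq_of_ker_le {A : Type*} [CommRing A] [Algebra F A] [Normal F L]
    {f g : A →ₐ[F] L} (hker : RingHom.ker f ≤ RingHom.ker g) :
    ∃ σ : L ≃ₐ[F] L, ∀ x, σ (f x) = g x := by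
  let E : IntermediateField F L :=
    f.range.toIntermediateField' (Subalgebra.isField_of_algebraic f.range)
  let fE : A →ₐ[F] E := f.rangeRestrict
  let φ : E →ₐ[F] L := AlgHom.liftOfSurjective fE f.rangeRestrict_surjective g
    (f.ker_rangeRestrict.trans_le hker)
  have hφ (x : A) : φ (fE x) = g x := AlgHom.liftOfSurjective_apply ..
  refine ⟨AlgEquiv.ofBijective (φ.liftNormal L) (AlgHom.normal_bijective F L L _), fun x ↦ ?_⟩
  exact (φ.liftNormal_commutes L (fE x)).trans (hφ x)

theorem exists_algEquiv_forall_eq_of_forall_finset [Normal F L] {x y : ι → L}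
    (h : ∀ t : Finset ι, ∃ σ : L ≃ₐ[F] L, ∀ i ∈ t, σ (x i) = y i) :
    ∃ σ : L ≃ₐ[F] L, ∀ i, σ (x i) = y i := by
  have hker : RingHom.ker (MvPolynomial.aeval x : MvPolynomial ι F →ₐ[F] L) ≤
      RingHom.ker (MvPolynomial.aeval y : MvPolynomial ι F →ₐ[F] L) := by
    intro P hP
    obtain ⟨σ, hσ⟩ := h P.vars
    rw [RingHom.mem_ker] at hP ⊢
    calc MvPolynomial.aeval y P
        = MvPolynomial.aeval (fun i ↦ σ (x i)) P :=
          MvPolynomial.eval₂Hom_congr' rfl (fun i hi _ ↦ (hσ i hi).symm) rfl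
      _ = σ (MvPolynomial.aeval x P) := (MvPolynomial.comp_aeval_apply x σ.toAlgHom P).symm
      _ = 0 := by rw [hP, map_zero]
  obtain ⟨σ, hσ⟩ := exists_algEquiv_forall_eq_of_ker_le hker
  exact ⟨σ, fun i ↦ by simpa only [MvPolynomial.aeval_X] using hσ (MvPolynomial.X i)⟩

end Normal

/-- A compatible system of roots of `a`: a choice of an `r`-th root `s r` of `a` for each `r ≥ 2`
such that `s (r * r') ^ r = s r'`. The values `s 0` and `s 1` are unconstrained. -/
structure IsCompatibleRootSystem {M : Type*} [Monoid M] (a : M) (s : ℕ → M) : Prop where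
  pow_self : ∀ r ≥ 2, s r ^ r = a
  mul_pow : ∀ r ≥ 2, ∀ r' ≥ 2, s (r * r') ^ r = s r'

namespace IsCompatibleRootSystem

variable {M N : Type*} [Monoid M] [Monoid N] {a : M} {b : N} {s : ℕ → M} {s' : ℕ → N} {n r : ℕ}

theorem pow_div (hs : IsCompatibleRootSystem a s) (hr : 2 ≤ r) (hn : n ≠ 0) (hrn : r ∣ n) :
    s n ^ (n / r) = s r := by
  obtain ⟨k, rfl⟩ := hrn
  rw [Nat.mul_div_cancel_left k (by omega)]
  obtain rfl | hk : k = 1 ∨ 2 ≤ k := by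
    have := right_ne_zero_of_mul hn
    omega
  · rw [mul_one, pow_one]
  · rw [mul_comm, hs.mul_pow k hk r hr]

theorem map_eq_of_dvd (hs : IsCompatibleRootSystem a s) (hs' : IsCompatibleRootSystem b s')
    (f : M →* N) (hr : 2 ≤ r) (hn : n ≠ 0) (hrn : r ∣ n) (hf : f (s n) = s' n) :
    f (s r) = s' r := by
  rw [← hs.pow_div hr hn hrn, map_pow, hf, hs'.pow_div hr hn hrn]

end IsCompatibleRootSystem

theorem compatible_systems_of_roots_conjugate_general
    {F L : Type*} [Field F] [Field L] [Algebra F L] [Normal F L] {a : F}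
    (hirr : ∀ r ≥ 2, Irreducible (X ^ r - C a)) {s s' : ℕ → L}
    (hs : IsCompatibleRootSystem (algebraMap F L a) s)
    (hs' : IsCompatibleRootSystem (algebraMap F L a) s') :
    ∃ σ : L ≃ₐ[F] L, ∀ r ≥ 2, σ (s r) = s' r := by
  suffices h : ∃ σ : L ≃ₐ[F] L, ∀ r : {r : ℕ // 2 ≤ r}, σ (s r) = s' r from
    h.imp fun σ hσ r hr ↦ hσ ⟨r, hr⟩
  refine exists_algEquiv_forall_eq_of_forall_finset fun t ↦ ?_
  -- The factor `2` keeps the common multiple an admissible index when `t` is empty.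
  let n : ℕ := 2 * ∏ r ∈ t, (r : ℕ)
  have hn : n ≠ 0 :=
    mul_ne_zero two_ne_zero (Finset.prod_ne_zero_iff.mpr fun r _ ↦ (two_pos.trans_le r.2).ne')
  have hn2 : 2 ≤ n := Nat.le_of_dvd (Nat.pos_of_ne_zero hn) (dvd_mul_right 2 _)
  have hconj : IsConjRoot F (s' n) (s n) :=
    isConjRoot_of_pow_eq_of_irreducible (hirr n hn2) (hs'.pow_self n hn2) (hs.pow_self n hn2)
  obtain ⟨σ, hσ⟩ := hconj.exists_algEquiv
  have dvd_n {r} (hrt : r ∈ t) : (r : ℕ) ∣ n :=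
    (Finset.dvd_prod_of_mem _ hrt).mul_left 2
  exact ⟨σ, fun r hrt ↦ hs.map_eq_of_dvd hs' (σ : L →* L) r.2 hn (dvd_n hrt) hσ⟩

/-- Let `K` be an algebraic closure of `ℚ` and `p` a prime. Any two compatible systems
`(s_r)_{r ≥ 2}` of roots of `p` in `K` (i.e. `s_r^r = p` and `s_{r·r'}^r = s_{r'}`) differ by
a field automorphism of `K` fixing `ℚ`. -/
theorem compatible_systems_of_roots_conjugate
    (K : Type*) [Field K] [Algebra ℚ K] [IsAlgClosure ℚ K]
    (p : ℕ) (hp : p.Prime)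
    (s s' : ℕ → K)
    (hs : ∀ r ≥ 2, s r ^ r = (p : K))
    (hs' : ∀ r ≥ 2, s' r ^ r = (p : K))
    (hcs : ∀ r ≥ 2, ∀ r' ≥ 2, s (r * r') ^ r = s r')
    (hcs' : ∀ r ≥ 2, ∀ r' ≥ 2, s' (r * r') ^ r = s' r') :
    ∃ σ : K ≃ₐ[ℚ] K, ∀ r ≥ 2, σ (s r) = s' r := by
  have : Normal ℚ K := IsAlgClosure.normal ℚ K
  have hp' : algebraMap ℚ K (algebraMap ℤ ℚ p) = p := by simp
  exact compatible_systems_of_roots_conjugate_general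
    (fun r hr ↦ irreducible_X_pow_sub_C_algebraMap_of_prime ℚ (Nat.prime_iff_prime_int.mp hp)
      (by omega))
    ⟨hp'.symm ▸ hs, hcs⟩ ⟨hp'.symm ▸ hs', hcs'⟩
end
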